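/- Let q = 2^m, let p(X) = \sum_{i=0}^{k-1} p_i X^{2^i} be a weakly linearized polynomial over F_q, and let S be a subset of F_q \setminus \{0\} with |S| \ge 2^{m-1}. Then for every nonzero \alpha \in F_q with \alpha \notin S there exist \beta, \gamma \in S such that p(\alpha) = p(\beta) + p(\gamma); that is, when at least (n+1)/2 of the n = 2^m - 1 encoded fragments of the homomorphic self-repairing code are available, any missing encoded fragment can be recreated by XORing two available encoded fragments. -/

import Mathlib

/-!
In a finite group `G`, the sets `A` and `g * B⁻¹` meet as soon as their sizes add up to at least
that of `G` and some element lies in neither; then `g ∈ A * B`. In additive notation, take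
`A = B = S` and `g = α`: the element `0` lies in neither `S` nor `α - S`, so `α` is a sum of two
elements of `S`, and a linearized polynomial, being additive, preserves this sum.
-/

open scoped Pointwise

@[to_additive]
theorem mul_mem_mul_of_notMem_of_card_le {G : Type*} [Group G] [Fintype G] [DecidableEq G]
    {A B : Finset G} {a b : G} (ha : a ∉ A) (hb : b ∉ B)
    (hcard : Fintype.card G ≤ A.card + B.card) : a * b ∈ A * B := by
  let reflect : G ↪ G := (Equiv.divLeft (a * b)).toEmbedding
  have hA : A ⊆ Finset.univ.erase a := Finset.subset_erase.2 ⟨A.subset_univ, ha⟩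
  have hB : B.map reflect ⊆ Finset.univ.erase a := by
    refine Finset.subset_erase.2 ⟨Finset.subset_univ _, fun h ↦ hb ?_⟩
    obtain ⟨y, hy, hya⟩ := Finset.mem_map.1 h
    have hyb : y = b := (mul_left_cancel (div_eq_iff_eq_mul.1 hya)).symm
    exact hyb ▸ hy
  have hlt : (Finset.univ.erase a).card < A.card + (B.map reflect).card := by
    rw [Finset.card_map]
    exact (Finset.card_erase_lt_of_mem (Finset.mem_univ a)).trans_le hcard
  obtain ⟨x, hx⟩ := Finset.inter_nonempty_of_card_lt_card_add_card hA hB hlt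
  obtain ⟨hxA, hxB⟩ := Finset.mem_inter.1 hx
  obtain ⟨y, hy, hyx⟩ := Finset.mem_map.1 hxB
  exact Finset.mem_mul.2 ⟨x, hxA, y, hy, (div_eq_iff_eq_mul.1 hyx).symm⟩

section LinearizedPolynomial

variable {R : Type*} [CommSemiring R] (q : ℕ) [ExpChar R q] {k : ℕ}

/-- Evaluation of the linearized polynomial `∑ i, c i * X ^ q ^ i` over a commutative semiring of
exponential characteristic `q`, bundled as an additive homomorphism. For `q = 2` these are the
weakly linearized polynomials of homomorphic self-repairing codes. -/
def linearizedEval (c : Fin k → R) : R →+ R :=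
  ∑ i : Fin k, (AddMonoidHom.mulLeft (c i)).comp (iterateFrobenius R q i).toAddMonoidHom

theorem linearizedEval_apply (c : Fin k → R) (x : R) :
    linearizedEval q c x = ∑ i : Fin k, c i * x ^ q ^ (i : ℕ) := by
  simp [linearizedEval, iterateFrobenius_def]

end LinearizedPolynomial

theorem self_repair_from_two_fragments_general {R : Type*} [CommRing R] [Fintype R] (q : ℕ)
    [ExpChar R q] {k : ℕ} (c : Fin k → R) {S : Finset R} (hS0 : 0 ∉ S)
    (hScard : Fintype.card R ≤ 2 * S.card) {α : R} (hαS : α ∉ S) :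
    ∃ β ∈ S, ∃ γ ∈ S,
      ∑ i : Fin k, c i * α ^ (q ^ (i : ℕ)) =
        (∑ i : Fin k, c i * β ^ (q ^ (i : ℕ))) +
        (∑ i : Fin k, c i * γ ^ (q ^ (i : ℕ))) := by
  classical
  have hα : 0 + α ∈ S + S := add_mem_add_of_notMem_of_card_le hS0 hαS (two_mul S.card ▸ hScard)
  obtain ⟨β, hβ, γ, hγ, hsum⟩ := Finset.mem_add.1 hα
  refine ⟨β, hβ, γ, hγ, ?_⟩
  simp only [← linearizedEval_apply]
  rw [← map_add, hsum, zero_add]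

/-- Let `q = 2^m`, let `p(X) = ∑_{i=0}^{k-1} p_i X^{2^i}` be a weakly
linearized polynomial over `F_q`, and let `S ⊆ F_q \ {0}` with `|S| ≥ 2^{m-1}`. Then for
every nonzero `α ∈ F_q` with `α ∉ S` there exist `β, γ ∈ S` such that
`p(α) = p(β) + p(γ)`: when at least `(n+1)/2` of the `n = 2^m - 1` encoded fragments of
the homomorphic self-repairing code are available, any missing encoded fragment can be
recreated by XORing two available encoded fragments. -/
theorem self_repair_from_two_fragments
    {K : Type*} [Field K] [Fintype K] (m k : ℕ) (hm : 0 < m)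
    (hcard : Fintype.card K = 2 ^ m)
    (p : Fin k → K)
    (S : Finset K) (hS0 : ∀ v ∈ S, v ≠ 0) (hScard : 2 ^ (m - 1) ≤ S.card)
    (α : K) (hα : α ≠ 0) (hαS : α ∉ S) :
    ∃ β ∈ S, ∃ γ ∈ S,
      ∑ i : Fin k, p i * α ^ (2 ^ (i : ℕ)) =
        (∑ i : Fin k, p i * β ^ (2 ^ (i : ℕ))) +
        (∑ i : Fin k, p i * γ ^ (2 ^ (i : ℕ))) := by
  have : CharP K 2 := charP_of_card_eq_prime_pow hcard
  have hhalf : Fintype.card K ≤ 2 * S.card := by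
    rw [hcard, ← mul_pow_sub_one hm.ne' 2]
    exact Nat.mul_le_mul_left 2 hScard
  exact self_repair_from_two_fragments_general 2 p (fun h ↦ hS0 0 h rfl) hhalf hαS
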